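/- arXiv:cs/0206025 — 3 statements merged into one kernel-verified Lean document; each statement's English description precedes it below -/
import Mathlib

section
/- Let (X, ⊑) be a complete lattice and let M, N be fuzzy intervals of X. Define M ∨̇ N as the pointwise infimum of the family S(M,N) of all fuzzy intervals A of X satisfying M ≤ A and N ≤ A (pointwise order). Then M ∨̇ N is itself a fuzzy interval, M ≤ M ∨̇ N, N ≤ M ∨̇ N, and for every fuzzy interval B with M ≤ B and N ≤ B one has M ∨̇ N ≤ B; that is, M ∨̇ N is the supremum of M and N within the set of fuzzy intervals. -/
/- The membership grade lattice `L = [0,1]`. -/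
instance : Fact ((0:ℝ) ≤ 1) := ⟨zero_le_one⟩

/-- A subset `S` of a lattice `X` is a closed interval iff it is empty or
of the form `[a, b] = {z : a ⊑ z ⊑ b}` for some `a b : X`. -/
def IsClosedInterval {X : Type*} [Lattice X] (S : Set X) : Prop :=
  S = ∅ ∨ ∃ a b : X, S = Set.Icc a b

/-- The `p`-cut of a fuzzy set `M : X → [0,1]` is `{x : M x ≥ p}`. -/
def cut {X : Type*} (M : X → unitInterval) (p : unitInterval) : Set X :=
  {x | p ≤ M x}

/-- A fuzzy set `M : X → [0,1]` is a fuzzy interval iff every `p`-cut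
of `M` is a closed interval of `X`. -/
def IsFuzzyInterval {X : Type*} [Lattice X] (M : X → unitInterval) : Prop :=
  ∀ p : unitInterval, IsClosedInterval (cut M p)

/-- `M ∨̇ N`: the pointwise infimum of all fuzzy intervals dominating both `M` and `N`. -/
noncomputable def fuzzySup {X : Type*} [Lattice X] (M N : X → unitInterval) :
    X → unitInterval :=
  fun x => ⨅ A ∈ {A : X → unitInterval | IsFuzzyInterval A ∧ M ≤ A ∧ N ≤ A}, A x

/-! The `p`-cuts of a pointwise infimum are the intersections of the `p`-cuts, and in a complete
lattice `⋂ i, [a i, b i] = [⨆ i, a i, ⨅ i, b i]`. Hence fuzzy intervals are closed under arbitrary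
pointwise infima, so the infimum of all fuzzy intervals above `M` and `N` is itself one of them. -/

theorem IsClosedInterval.iInter {X : Type*} {ι : Sort*} [CompleteLattice X] {S : ι → Set X}
    (hS : ∀ i, IsClosedInterval (S i)) : IsClosedInterval (⋂ i, S i) := by
  by_cases hempty : ∃ i, S i = ∅
  · obtain ⟨i, hi⟩ := hempty
    exact .inl (Set.subset_eq_empty (Set.iInter_subset S i) hi)
  · choose a b hab using fun i => (hS i).resolve_left (not_exists.mp hempty i)
    refine .inr ⟨⨆ i, a i, ⨅ i, b i, ?_⟩
    ext x
    simp only [hab, Set.mem_iInter, Set.mem_Icc, iSup_le_iff, le_iInf_iff, forall_and]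

theorem cut_iInf {X : Type*} {ι : Sort*} (A : ι → X → unitInterval) (p : unitInterval) :
    cut (⨅ i, A i) p = ⋂ i, cut (A i) p := by
  ext x
  simp only [cut, Set.mem_ofPred_eq, iInf_apply, le_iInf_iff, Set.mem_iInter]

theorem IsFuzzyInterval.iInf {X : Type*} {ι : Sort*} [CompleteLattice X]
    {A : ι → X → unitInterval} (hA : ∀ i, IsFuzzyInterval (A i)) :
    IsFuzzyInterval (⨅ i, A i) := by
  intro p
  rw [cut_iInf]
  exact .iInter fun i => hA i p

theorem fuzzySup_eq_iInf {X : Type*} [Lattice X] (M N : X → unitInterval) :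
    fuzzySup M N = ⨅ A ∈ {A : X → unitInterval | IsFuzzyInterval A ∧ M ≤ A ∧ N ≤ A}, A := by
  funext x
  simp only [fuzzySup, iInf_apply]

theorem fuzzySup_is_lub_general {X : Type*} [CompleteLattice X] (M N : X → unitInterval) :
    IsLeast {A : X → unitInterval | IsFuzzyInterval A ∧ M ≤ A ∧ N ≤ A} (fuzzySup M N) := by
  rw [fuzzySup_eq_iInf]
  refine ⟨⟨?isFuzzyInterval, ?left_le, ?right_le⟩, fun B hB => iInf₂_le B hB⟩
  case isFuzzyInterval => exact .iInf fun A => .iInf fun hA => hA.1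
  case left_le => exact le_iInf₂ fun A hA => hA.2.1
  case right_le => exact le_iInf₂ fun A hA => hA.2.2

/-- For fuzzy intervals `M, N` of a complete lattice, `M ∨̇ N` is a fuzzy interval
and is the least upper bound of `M` and `N` among fuzzy intervals. -/
theorem fuzzySup_is_lub {X : Type*} [CompleteLattice X] (M N : X → unitInterval)
    (hM : IsFuzzyInterval M) (hN : IsFuzzyInterval N) :
    IsFuzzyInterval (fuzzySup M N) ∧ M ≤ fuzzySup M N ∧ N ≤ fuzzySup M N ∧
    ∀ B : X → unitInterval, IsFuzzyInterval B → M ≤ B → N ≤ B → fuzzySup M N ≤ B := by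
  obtain ⟨⟨isFuzzyInterval, left_le, right_le⟩, least⟩ := fuzzySup_is_lub_general M N
  exact ⟨isFuzzyInterval, left_le, right_le, fun B hB hMB hNB => least ⟨hB, hMB, hNB⟩⟩
end

section
/- Let (X, ⊑) be a complete lattice and let M : X → [0,1] be a fuzzy interval of X. Then for every p ∈ [0,1] with M_p nonempty one has M(⊓M_p) ∧ M(⊔M_p) = inf_{x ∈ M_p} M(x), where ∧ denotes minimum in [0,1]. -/
namespace IsClosedInterval

variable {X : Type*} [Lattice X] {S : Set X}

theorem ordConnected (hS : IsClosedInterval S) : S.OrdConnected := by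
  obtain rfl | ⟨a, b, rfl⟩ := hS
  · exact Set.ordConnected_empty
  · exact Set.ordConnected_Icc

theorem exists_le_eq_Icc (hS : IsClosedInterval S) (hne : S.Nonempty) :
    ∃ a b : X, a ≤ b ∧ S = Set.Icc a b := by
  obtain rfl | ⟨a, b, rfl⟩ := hS
  · exact absurd hne Set.not_nonempty_empty
  · exact ⟨a, b, Set.nonempty_Icc.mp hne, rfl⟩

theorem isLeast_of_isGLB {a : X} (hS : IsClosedInterval S) (hne : S.Nonempty)
    (ha : IsGLB S a) : IsLeast S a := by
  obtain ⟨c, d, hcd, rfl⟩ := hS.exists_le_eq_Icc hne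
  have hc : IsLeast (Set.Icc c d) c := isLeast_Icc hcd
  rwa [ha.unique hc.isGLB]

theorem isGreatest_of_isLUB {b : X} (hS : IsClosedInterval S) (hne : S.Nonempty)
    (hb : IsLUB S b) : IsGreatest S b := by
  obtain ⟨c, d, hcd, rfl⟩ := hS.exists_le_eq_Icc hne
  have hd : IsGreatest (Set.Icc c d) d := isGreatest_Icc hcd
  rwa [hb.unique hd.isLUB]

end IsClosedInterval

theorem fuzzy_interval_endpoint_min_general {X L : Type*} [Preorder X] [SemilatticeInf L]
    {M : X → L} (hM : ∀ q : L, {x | q ≤ M x}.OrdConnected) {S : Set X} {a b : X}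
    (ha : IsLeast S a) (hb : IsGreatest S b) : IsGLB (M '' S) (M a ⊓ M b) := by
  constructor
  · rintro _ ⟨x, hx, rfl⟩
    -- Both endpoints lie in the cut at level `M a ⊓ M b`, so by convexity `x` does too.
    exact (hM (M a ⊓ M b)).out inf_le_left inf_le_right ⟨ha.2 hx, hb.2 hx⟩
  · intro q hq
    exact le_inf (hq (Set.mem_image_of_mem M ha.1)) (hq (Set.mem_image_of_mem M hb.1))

/-- For a fuzzy interval `M` and any `p` with nonempty cut:
`M (⊓ M_p) ∧ M (⊔ M_p) = ⨅_{x ∈ M_p} M x`. -/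
theorem fuzzy_interval_endpoint_min {X : Type*} [CompleteLattice X]
    (M : X → unitInterval) (hM : IsFuzzyInterval M) :
    ∀ p : unitInterval, (cut M p).Nonempty →
      min (M (sInf (cut M p))) (M (sSup (cut M p))) = ⨅ x ∈ cut M p, M x := by
  intro p hp
  have hinf : IsLeast (cut M p) (sInf (cut M p)) := (hM p).isLeast_of_isGLB hp (isGLB_sInf _)
  have hsup : IsGreatest (cut M p) (sSup (cut M p)) := (hM p).isGreatest_of_isLUB hp (isLUB_sSup _)
  rw [← sInf_image]
  exact (fuzzy_interval_endpoint_min_general (fun q ↦ (hM q).ordConnected) hinf hsup).sInf_eq.symm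
end

section
/- Let (X, ⊑) be a complete lattice and let M : X → [0,1] be a fuzzy interval of X. For any p ∈ [0,1] with M_p nonempty, set p₁ = M(⊓M_p) and p₂ = M(⊔M_p). Then M_p = M_{p₁ ∧ p₂}, where ∧ denotes minimum in [0,1]. -/
section ClosedInterval

variable {X : Type*} [Lattice X] {S : Set X} {a b : X}

theorem IsClosedInterval.ordConnected_s11 (hS : IsClosedInterval S) : S.OrdConnected := by
  obtain rfl | ⟨l, u, rfl⟩ := hS
  · exact Set.ordConnected_empty
  · exact Set.ordConnected_Icc

theorem IsClosedInterval.isLeast_of_isGLB_s11 (hS : IsClosedInterval S) (hne : S.Nonempty)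
    (ha : IsGLB S a) : IsLeast S a := by
  obtain rfl | ⟨l, u, rfl⟩ := hS
  · exact absurd hne Set.not_nonempty_empty
  · have hlu : l ≤ u := Set.nonempty_Icc.mp hne
    obtain rfl : a = l := ha.unique (isGLB_Icc hlu)
    exact isLeast_Icc hlu

theorem IsClosedInterval.isGreatest_of_isLUB_s11 (hS : IsClosedInterval S) (hne : S.Nonempty)
    (hb : IsLUB S b) : IsGreatest S b := by
  obtain rfl | ⟨l, u, rfl⟩ := hS
  · exact absurd hne Set.not_nonempty_empty
  · have hlu : l ≤ u := Set.nonempty_Icc.mp hne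
    obtain rfl : b = u := hb.unique (isLUB_Icc hlu)
    exact isGreatest_Icc hlu

end ClosedInterval

section OrdConnectedCuts

variable {X L : Type*} [Preorder X] [SemilatticeInf L] {M : X → L} {a b x : X} {p : L}

theorem inf_le_of_ordConnected_preimage_Ici (hM : ∀ q, (M ⁻¹' Set.Ici q).OrdConnected)
    (hx : x ∈ Set.Icc a b) : M a ⊓ M b ≤ M x :=
  (hM (M a ⊓ M b)).out inf_le_left inf_le_right hx

theorem cut_eq_cut_min_general (hM : ∀ q, (M ⁻¹' Set.Ici q).OrdConnected)
    (ha : IsLeast (M ⁻¹' Set.Ici p) a) (hb : IsGreatest (M ⁻¹' Set.Ici p) b) :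
    M ⁻¹' Set.Ici p = M ⁻¹' Set.Ici (M a ⊓ M b) := by
  have hp : p ≤ M a ⊓ M b := le_inf ha.1 hb.1
  apply Set.Subset.antisymm
  · exact fun x hx ↦ inf_le_of_ordConnected_preimage_Ici hM ⟨ha.2 hx, hb.2 hx⟩
  · exact Set.preimage_mono (Set.Ici_subset_Ici.mpr hp)

end OrdConnectedCuts

/-- For a fuzzy interval `M` and `p` with nonempty cut, setting `p₁ = M (⊓ M_p)`
and `p₂ = M (⊔ M_p)`, one has `M_p = M_{p₁ ∧ p₂}`. -/
theorem cut_eq_cut_min {X : Type*} [CompleteLattice X]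
    (M : X → unitInterval) (hM : IsFuzzyInterval M)
    (p : unitInterval) (hp : (cut M p).Nonempty) :
    cut M p = cut M (min (M (sInf (cut M p))) (M (sSup (cut M p)))) :=
  cut_eq_cut_min_general (M := M) (fun q ↦ (hM q).ordConnected_s11)
    ((hM p).isLeast_of_isGLB_s11 hp (isGLB_sInf _)) ((hM p).isGreatest_of_isLUB_s11 hp (isLUB_sSup _))
end
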